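/- Let D ⊂ [-π,π] be a Borel set with non-empty interior and M ⊂ ℤ a finite set. Let V(D) be the set of x ∈ ℓ∞(ℤ) such that the functional f ↦ Σ_t x(t) f̂_t vanishes on all f ∈ A supported in D. If x₁, x₂ ∈ V(D) and x₁(t) = x₂(t) for all t ∉ M, then x₁ = x₂. That is, signals with spectral gap D are uniquely determined by their values outside any finite set. -/

import Mathlib

open Real

/-- `x ∈ ℓ∞(ℤ)` has the spectral gap `D`: the functional `f ↦ Σ_t x(t) f̂_t` vanishes on every
`f` in the Wiener algebra (given by its absolutely summable coefficient sequence `a`, so that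
`f(ω) = Σ_k a_k e^{iωk}`) that vanishes on `[-π,π] \ D`, i.e. is supported in `D`. -/
def HasSpectralGap (D : Set ℝ) (x : ℤ → ℂ) : Prop :=
  ∀ a : ℤ → ℂ, Summable (fun k : ℤ => ‖a k‖) →
    (∀ ω ∈ Set.Icc (-Real.pi) Real.pi, ω ∉ D →
      (∑' k : ℤ, a k * Complex.exp (Complex.I * k * ω)) = 0) →
    (∑' t : ℤ, x t * a t) = 0

/-- Coefficients of a tent-like function supported in `[-δ, δ]` mod `2π`. -/
noncomputable def tentCoeff (δ : ℝ) (k : ℤ) : ℂ :=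
  1 / (k : ℂ) ^ 2 * (Complex.exp (Complex.I * k * δ) - 2 + Complex.exp (-(Complex.I * k * δ)))
    - if k = 0 then (δ : ℂ) ^ 2 else 0

lemma tentCoeff_zero (δ : ℝ) : tentCoeff δ 0 = -(δ : ℂ) ^ 2 := by
  simp [tentCoeff]

lemma hasSum_sq (u : ℝ) (h0 : 0 ≤ u) (h1 : u ≤ 2 * π) :
    HasSum (fun k : ℤ => 1 / (k : ℂ) ^ 2 * Complex.exp (Complex.I * k * u))
      ((u ^ 2 / 2 - π * u + π ^ 2 / 3 : ℝ) : ℂ) := by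
  have hpi := Real.pi_pos
  have hx : u / (2 * π) ∈ Set.Icc (0 : ℝ) 1 :=
    ⟨by positivity, by rw [div_le_one (by positivity)]; exact h1⟩
  have h := hasSum_one_div_pow_mul_fourier_mul_bernoulliFun (k := 2) le_rfl hx
  have hpc : (π : ℂ) ≠ 0 := by exact_mod_cast hpi.ne'
  convert h using 1
  · funext k
    rw [fourier_coe_apply]
    congr 2
    push_cast
    field_simp
  · have : bernoulliFun 2 (u / (2 * π)) = (u / (2 * π)) ^ 2 - u / (2 * π) + 1 / 6 := by
      simp [bernoulliFun, Polynomial.bernoulli, Finset.sum_range_succ, bernoulli_eq_bernoulli'_of_ne_one]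
      ring
    rw [this, mul_pow, mul_pow, Complex.I_sq]
    push_cast
    field_simp
    norm_num [Nat.factorial]
    try ring

lemma tent_hasSum (δ u : ℝ) (hδ : 0 ≤ δ) (h0 : δ ≤ u) (h1 : u ≤ 2 * π - δ) :
    HasSum (fun k : ℤ => tentCoeff δ k * Complex.exp (Complex.I * k * u)) 0 := by
  have A := hasSum_sq (u + δ) (by linarith) (by linarith)
  have B := (hasSum_sq u (by linarith) (by linarith)).mul_left 2
  have C := hasSum_sq (u - δ) (by linarith) (by linarith)
  have E : HasSum (fun k : ℤ => if k = 0 then (δ : ℂ) ^ 2 else 0) ((δ : ℂ) ^ 2) :=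
    hasSum_ite_eq 0 _
  convert! ((A.sub B).add C).sub E using 1
  · funext k
    have e1 : Complex.exp (Complex.I * k * ((u + δ : ℝ) : ℂ))
        = Complex.exp (Complex.I * k * δ) * Complex.exp (Complex.I * k * u) := by
      rw [← Complex.exp_add]; congr 1; push_cast; ring
    have e2 : Complex.exp (Complex.I * k * ((u - δ : ℝ) : ℂ))
        = Complex.exp (-(Complex.I * k * δ)) * Complex.exp (Complex.I * k * u) := by
      rw [← Complex.exp_add]; congr 1; push_cast; ring
    rw [e1, e2, tentCoeff]
    split_ifs with hk
    · subst hk; simp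
    · ring
  · push_cast; ring

lemma norm_exp_I (k : ℤ) (u : ℝ) : ‖Complex.exp (Complex.I * k * u)‖ = 1 := by
  rw [Complex.norm_exp]; simp

lemma tent_summable (δ : ℝ) (hδ : 0 ≤ δ) (h1 : δ ≤ π) :
    Summable (fun k : ℤ => ‖tentCoeff δ k‖) := by
  have h := (tent_hasSum δ δ hδ le_rfl (by linarith)).summable.norm
  simpa [norm_mul, norm_exp_I] using h

lemma tent_hasSum' (δ u : ℝ) (hδ : 0 ≤ δ) (h0 : δ ≤ |u|) (h1 : |u| ≤ 2 * π - δ) :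
    HasSum (fun k : ℤ => tentCoeff δ k * Complex.exp (Complex.I * k * u)) 0 := by
  rcases le_total 0 u with h | h
  · rw [abs_of_nonneg h] at *
    exact tent_hasSum δ u hδ h0 h1
  · rw [abs_of_nonpos h] at *
    convert tent_hasSum δ (u + 2 * π) hδ (by linarith) (by linarith) using 3 with k
    have : Complex.I * k * ((u + 2 * π : ℝ) : ℂ)
        = Complex.I * k * u + k * (2 * π * Complex.I) := by push_cast; ring
    rw [this, Complex.exp_add, Complex.exp_int_mul_two_pi_mul_I, mul_one]

/-- Exponential characters of `ℝ`. -/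
noncomputable def expChar' (n : ℤ) : Multiplicative ℝ →* ℂ where
  toFun s := Complex.exp (Complex.I * n * (Multiplicative.toAdd s : ℝ))
  map_one' := by simp
  map_mul' a b := by
    rw [← Complex.exp_add]; congr 1; simp; ring

lemma expChar'_injective : Function.Injective expChar' := by
  intro m n h
  have h1 : ∀ s : ℝ, Complex.exp (Complex.I * m * s) = Complex.exp (Complex.I * n * s) :=
    fun s => DFunLike.congr_fun h (Multiplicative.ofAdd s)
  have d (j : ℤ) : HasDerivAt (fun s : ℝ => Complex.exp (Complex.I * j * s)) (Complex.I * j) 0 := by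
    have := ((Complex.ofRealCLM.hasDerivAt (x := (0:ℝ))).const_mul (Complex.I * j)).cexp
    simpa using this
  have := (d m).unique ((funext h1 : (fun s : ℝ => Complex.exp (Complex.I * m * s)) = _) ▸ d n)
  simpa using this

lemma coeff_zero_of_local (M : Finset ℤ) (c : ℤ → ℂ) (s₀ : ℝ)
    (h : ∀ᶠ s : ℝ in nhds s₀, ∑ t ∈ M, c t * Complex.exp (Complex.I * t * s) = 0) :
    ∀ t ∈ M, c t = 0 := by
  have han : AnalyticOnNhd ℝ (fun s : ℝ => ∑ t ∈ M, c t * Complex.exp (Complex.I * t * s))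
      Set.univ := by
    intro s _
    have hs : AnalyticAt ℝ (fun s : ℝ => (s : ℂ)) s := Complex.ofRealCLM.analyticAt s
    refine Finset.analyticAt_fun_sum _ fun t _ => ?_
    have he : AnalyticAt ℝ Complex.exp (Complex.I * t * s) :=
      (analyticAt_cexp (z := Complex.I * t * s)).restrictScalars
    have hl : AnalyticAt ℝ (fun s : ℝ => Complex.I * t * (s : ℂ)) s := analyticAt_const.mul hs
    exact analyticAt_const.mul (AnalyticAt.comp (f := fun s : ℝ => Complex.I * t * (s : ℂ)) he hl)
  have hz := han.eq_of_eventuallyEq (g := fun _ => 0) (fun s _ => analyticAt_const) h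
  have li := (linearIndependent_monoidHom (Multiplicative ℝ) ℂ).comp expChar' expChar'_injective
  rw [linearIndependent_iff'] at li
  refine li M c ?_
  funext s
  have := congrFun hz (Multiplicative.toAdd s)
  simpa [expChar'] using this

/-- Signals in `ℓ∞(ℤ)` with a common spectral gap `D` (a Borel subset of `[-π,π]` with
non-empty interior) are uniquely determined by their values outside any finite set `M`. -/
theorem recovery_of_finitely_many_values (D : Set ℝ)
    (hD : D ⊆ Set.Icc (-Real.pi) Real.pi) (hDborel : MeasurableSet D)
    (hint : (interior D).Nonempty)
    (M : Finset ℤ) (x₁ x₂ : ℤ → ℂ)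
    (hb₁ : BddAbove (Set.range fun t : ℤ => ‖x₁ t‖))
    (hb₂ : BddAbove (Set.range fun t : ℤ => ‖x₂ t‖))
    (hg₁ : HasSpectralGap D x₁) (hg₂ : HasSpectralGap D x₂)
    (hagree : ∀ t : ℤ, t ∉ M → x₁ t = x₂ t) :
    x₁ = x₂ := by
  have key : ∀ b : ℤ → ℂ, Summable (fun k : ℤ => ‖b k‖) →
      (∀ ω ∈ Set.Icc (-Real.pi) Real.pi, ω ∉ D →
        (∑' k : ℤ, b k * Complex.exp (Complex.I * k * ω)) = 0) →
      ∑ t ∈ M, (x₁ t - x₂ t) * b t = 0 := by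
    intro b hb hz
    have sm : ∀ x : ℤ → ℂ, BddAbove (Set.range fun t : ℤ => ‖x t‖) →
        Summable (fun t => x t * b t) := by
      rintro x ⟨K, hK⟩
      refine Summable.of_norm_bounded (hb.mul_left K) fun t => ?_
      rw [norm_mul]
      exact mul_le_mul_of_nonneg_right (hK ⟨t, rfl⟩) (norm_nonneg _)
    have h := (sm x₁ hb₁).tsum_sub (sm x₂ hb₂)
    rw [hg₁ b hb hz, hg₂ b hb hz, sub_zero, tsum_eq_sum (s := M)] at h
    · simpa [sub_mul] using h
    · intro t ht
      rw [hagree t ht, sub_self]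
  obtain ⟨w, hw⟩ := hint
  obtain ⟨r, hr, hball⟩ := Metric.isOpen_iff.1 isOpen_interior w hw
  have hball' : ∀ z, |z - w| < r → z ∈ D := fun z hz =>
    interior_subset (hball (by rwa [Metric.mem_ball, Real.dist_eq]))
  obtain ⟨δ, hδ, hδr⟩ : ∃ δ, 0 < δ ∧ r = 4 * δ := ⟨r / 4, by linarith, by ring⟩
  have hlo := (hD (hball' (w - 2 * δ) (by rw [abs_lt]; constructor <;> linarith))).1
  have hhi := (hD (hball' (w + 2 * δ) (by rw [abs_lt]; constructor <;> linarith))).2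
  funext t₀
  by_cases ht₀ : t₀ ∈ M
  swap
  · exact hagree t₀ ht₀
  have hc := coeff_zero_of_local M (fun t => (x₁ t - x₂ t) * tentCoeff δ (t - t₀)) (-w) ?_ t₀ ht₀
  · simp only [sub_self, tentCoeff_zero] at hc
    have : (δ : ℂ) ≠ 0 := by exact_mod_cast hδ.ne'
    simpa [this, sub_eq_zero] using hc
  · filter_upwards [Metric.ball_mem_nhds (-w) hδ] with s hs
    rw [Metric.mem_ball, Real.dist_eq, abs_lt] at hs
    have := key (fun t => tentCoeff δ (t - t₀) * Complex.exp (Complex.I * t * s)) ?_ ?_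
    · simpa [mul_assoc] using this
    · simp only [norm_mul, norm_exp_I, mul_one]
      exact (Equiv.subRight t₀).summable_iff.2 (tent_summable δ hδ.le (by linarith))
    · intro ω hω hωD
      have hfar : 4 * δ ≤ |ω - w| := by
        by_contra hcon
        exact hωD (hball' ω (by linarith))
      have h := tent_hasSum' δ (ω + s) hδ.le
        (by
          rcases le_abs.1 hfar with h | h
          · exact le_abs.2 (Or.inl (by linarith))
          · exact le_abs.2 (Or.inr (by linarith)))
        (abs_le.2 ⟨by linarith [hω.1], by linarith [hω.2]⟩)
      have h2 := ((Equiv.subRight t₀).hasSum_iff.2 h).mul_right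
        (Complex.exp (Complex.I * t₀ * (ω + s)))
      rw [zero_mul] at h2
      rw [← h2.tsum_eq]
      congr 1
      funext k
      simp only [Function.comp, Equiv.subRight_apply, mul_assoc, ← Complex.exp_add]
      congr 2
      push_cast
      ring
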